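/- Let ε > 0 and g(q₁,q₂,ξ) = q₁cos ξ + q₂sin ξ − (ε/2)cos 2ξ. Then at every point (q₁,q₂,ξ) with ∂g/∂ξ = 0 and ∂²g/∂ξ² = 0 (the fold locus), one has ∂³g/∂ξ³(q,ξ) = −3ε sin 2ξ and ∂⁴g/∂ξ⁴(q,ξ) = −6ε cos 2ξ. Consequently, along the fold locus the third fiber derivative vanishes exactly when ξ ∈ (π/2)ℤ — i.e. at exactly the four values ξ ∈ {0, π/2, π, 3π/2} in [0, 2π) — and at each such point ∂⁴g/∂ξ⁴ = ±6ε ≠ 0. (The perturbed Lagrangian collapse has a circle of folds carrying exactly four cusps.) -/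

import Mathlib

/-!
Write `g₁, g₂, g₃, g₄` for the successive fiber derivatives. The family is a trigonometric
polynomial in `ξ` with frequencies `1` and `2`. Differentiating twice multiplies the frequency `1`
part by `-1` and the frequency `2` part by `-4`, so `g₃ + g₁` and `g₄ + g₂` contain only
frequency `2`: they equal `-3 ε sin 2ξ` and `-6 ε cos 2ξ`. On the fold locus `g₁ = g₂ = 0`,
which gives the two formulas. The zeros of `sin 2ξ` are the multiples of `π / 2`, and there
`cos 2ξ = ±1`.
-/

open Real Set

noncomputable section

/-- The fiberwise derivative `∂g/∂ξ` of a family `g(q,ξ)` with fiber variable `ξ`. -/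
def dxi (g : (ℝ × ℝ) × ℝ → ℝ) : (ℝ × ℝ) × ℝ → ℝ :=
  fun p => deriv (fun s => g (p.1, s)) p.2

/-- The perturbed Lagrangian collapse family
`g(q₁,q₂,ξ) = q₁cos ξ + q₂sin ξ − (ε/2)cos 2ξ`. -/
def gPert (ε : ℝ) : (ℝ × ℝ) × ℝ → ℝ :=
  fun p => p.1.1 * Real.cos p.2 + p.1.2 * Real.sin p.2 - (ε / 2) * Real.cos (2 * p.2)

/-- The family of trigonometric polynomials `a(q) cos ξ + b(q) sin ξ + c cos 2ξ + d sin 2ξ`, where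
only the frequency `1` coefficients depend on the base point. -/
def trigFamily (a b : ℝ × ℝ → ℝ) (c d : ℝ) : (ℝ × ℝ) × ℝ → ℝ :=
  fun p => a p.1 * Real.cos p.2 + b p.1 * Real.sin p.2 + c * Real.cos (2 * p.2)
    + d * Real.sin (2 * p.2)

theorem dxi_trigFamily (a b : ℝ × ℝ → ℝ) (c d : ℝ) :
    dxi (trigFamily a b c d) = trigFamily b (fun q => -a q) (2 * d) (-2 * c) := by
  funext p
  have h2 : HasDerivAt (fun s : ℝ => 2 * s) 2 p.2 := by
    simpa using (hasDerivAt_id p.2).const_mul (2 : ℝ)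
  have h := ((((Real.hasDerivAt_cos p.2).const_mul (a p.1)).add
    ((Real.hasDerivAt_sin p.2).const_mul (b p.1))).add (h2.cos.const_mul c)).add
    (h2.sin.const_mul d)
  refine h.deriv.trans ?_
  simp only [trigFamily]
  ring

theorem gPert_eq_trigFamily (ε : ℝ) :
    gPert ε = trigFamily (fun q => q.1) (fun q => q.2) (-(ε / 2)) 0 := by
  funext p
  simp only [gPert, trigFamily]
  ring

/-- Along the fold locus of the perturbed Lagrangian collapse, the third fiber
derivative is `−3ε sin 2ξ` and the fourth is `−6ε cos 2ξ`; hence the third derivative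
vanishes exactly when `ξ ∈ (π/2)ℤ`, and at those points the fourth derivative is
`±6ε ≠ 0`: the circle of folds carries exactly four cusps. -/
theorem perturbed_collapse_four_cusps (ε : ℝ) (hε : 0 < ε) :
    ∀ q : ℝ × ℝ, ∀ ξ : ℝ,
      dxi (gPert ε) (q, ξ) = 0 → dxi (dxi (gPert ε)) (q, ξ) = 0 →
      dxi (dxi (dxi (gPert ε))) (q, ξ) = -3 * ε * Real.sin (2 * ξ) ∧
      dxi (dxi (dxi (dxi (gPert ε)))) (q, ξ) = -6 * ε * Real.cos (2 * ξ) ∧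
      (dxi (dxi (dxi (gPert ε))) (q, ξ) = 0 ↔ ∃ k : ℤ, ξ = (k : ℝ) * (π / 2)) ∧
      (dxi (dxi (dxi (gPert ε))) (q, ξ) = 0 →
        (dxi (dxi (dxi (dxi (gPert ε)))) (q, ξ) = 6 * ε ∨
         dxi (dxi (dxi (dxi (gPert ε)))) (q, ξ) = -6 * ε) ∧
        dxi (dxi (dxi (dxi (gPert ε)))) (q, ξ) ≠ 0) := by
  intro q ξ h1 h2
  have h3 : dxi (dxi (dxi (gPert ε))) (q, ξ) = -3 * ε * Real.sin (2 * ξ) := by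
    simp only [gPert_eq_trigFamily, dxi_trigFamily, trigFamily] at h1 ⊢
    linear_combination -h1
  have h4 : dxi (dxi (dxi (dxi (gPert ε)))) (q, ξ) = -6 * ε * Real.cos (2 * ξ) := by
    simp only [gPert_eq_trigFamily, dxi_trigFamily, trigFamily] at h2 ⊢
    linear_combination -h2
  have hsin : -3 * ε * Real.sin (2 * ξ) = 0 ↔ Real.sin (2 * ξ) = 0 := by
    simp [hε.ne']
  rw [h3, h4, hsin]
  refine ⟨rfl, rfl, ?_, fun hs => ?_⟩
  · rw [Real.sin_eq_zero_iff]
    refine exists_congr fun k => ⟨fun h => ?_, fun h => ?_⟩ <;> linarith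
  · rcases Real.sin_eq_zero_iff_cos_eq.mp hs with hc | hc <;> rw [hc]
    · exact ⟨Or.inr (by ring), by linarith⟩
    · exact ⟨Or.inl (by ring), by linarith⟩
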